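/- arXiv:2102.09406 — 2 statements merged into one kernel-verified Lean document; each statement's English description precedes it below -/
import Mathlib

section
/- Let R ∈ ℝ^{n×n} be nonnegative, row-stochastic (R 1 = 1), with positive diagonal entries and irreducible, and let u ∈ ℝ^n be its positive left eigenvector with u^T R = u^T and u^T 1 = 1. Then there exists a constant σ_R with 0 < σ_R < 1 such that for every q ∈ ℕ and every matrix x ∈ ℝ^{n×q}: ‖R x − 1 u^T x‖_F^u ≤ σ_R · ‖x − 1 u^T x‖_F^u. -/
/-- The Frobenius norm of a real matrix. -/
noncomputable def frobNorm {m q : Type*} [Fintype m] [Fintype q]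
    (A : Matrix m q ℝ) : ℝ :=
  Real.sqrt (∑ i, ∑ j, (A i j) ^ 2)

/-- The weighted Frobenius norm `‖A‖_F^u = ‖diag(√u) A‖_F`. -/
noncomputable def frobNormW {n q : Type*} [Fintype n] [Fintype q] [DecidableEq n]
    (w : n → ℝ) (A : Matrix n q ℝ) : ℝ :=
  frobNorm (Matrix.diagonal (fun i => Real.sqrt (w i)) * A)

/-!
Write `J = 1 uᵀ`. Since `R J = J J = J`, we have `R x - J x = (R - J) (x - J x)`, so it is enough
that `R - J` is a strict contraction for the quadratic form `Q y = ∑ i, u i * y i ^ 2`. As `u` is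
stationary, the law of total variance gives
`Q y - Q ((R - J) y) = (u ⬝ y) ^ 2 + ∑ i, u i * Var (R i) y`.
If this vanishes, `y` is constant on the support of each row of `R`. The positive diagonal makes
`y` constant along the edges of the graph of `R`, irreducibility makes it constant, and
`u ⬝ y = 0` makes it zero. Compactness of the unit sphere then yields a uniform contraction factor.
-/

open Matrix QuadraticMap

section QuadraticForm

variable {E : Type*} [NormedAddCommGroup E] [NormedSpace ℝ E] [FiniteDimensional ℝ E]
  {Q : QuadraticForm ℝ E}

lemma continuous_quadraticForm (Q : QuadraticForm ℝ E) : Continuous Q := by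
  have hQ : (fun x ↦ (associated Q).toContinuousBilinearMap x x) = Q :=
    funext fun x ↦ associated_eq_self_apply ℝ Q x
  rw [← hQ]
  fun_prop

lemma exists_le_mul_of_posDef (hQ : Q.PosDef) (Q' : QuadraticForm ℝ E) :
    ∃ C, 1 < C ∧ ∀ x, Q' x ≤ C * Q x := by
  have hcont : ContinuousOn (fun x ↦ Q' x / Q x) (Metric.sphere 0 1) :=
    (continuous_quadraticForm Q').continuousOn.div (continuous_quadraticForm Q).continuousOn
      fun x hx ↦ (hQ x (ne_zero_of_mem_unit_sphere ⟨x, hx⟩)).ne'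
  obtain ⟨B, hB⟩ := (isCompact_sphere (0 : E) 1).bddAbove_image hcont
  refine ⟨max B 2, one_lt_two.trans_le (le_max_right _ _), fun x ↦ ?_⟩
  obtain rfl | hx := eq_or_ne x 0
  · simp
  have hscale : Q' (‖x‖⁻¹ • x) / Q (‖x‖⁻¹ • x) = Q' x / Q x := by
    have : ‖x‖ ≠ 0 := norm_ne_zero_iff.2 hx
    simp only [QuadraticMap.map_smul, smul_eq_mul]
    exact mul_div_mul_left _ _ (by positivity)
  have hmem : ‖x‖⁻¹ • x ∈ Metric.sphere (0 : E) 1 := by simp [norm_smul, hx]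
  rw [← div_le_iff₀ (hQ x hx), ← hscale]
  exact (hB ⟨_, hmem, rfl⟩).trans (le_max_left _ _)

lemma exists_lt_one_le_mul_of_posDef_sub {Q' : QuadraticForm ℝ E} (h : (Q - Q').PosDef) :
    ∃ c, 0 < c ∧ c < 1 ∧ ∀ x, Q' x ≤ c * Q x := by
  obtain ⟨C, hC, hle⟩ := exists_le_mul_of_posDef h Q
  have hC0 : 0 < C := one_pos.trans hC
  refine ⟨1 - C⁻¹, sub_pos.2 (inv_lt_one_of_one_lt₀ hC), sub_lt_self _ (inv_pos.2 hC0),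
    fun x ↦ ?_⟩
  have hx : C⁻¹ * Q x ≤ Q x - Q' x := (inv_mul_le_iff₀ hC0).2 (hle x)
  linarith

end QuadraticForm

section WeightedVar

variable {ι 𝕜 : Type*} [Fintype ι] [CommRing 𝕜] {w : ι → 𝕜}

/-- The variance of `y` with respect to the weights `w`. The mean is taken to be `w ⬝ᵥ y`, without
dividing by the total weight, so this is the usual variance when the weights sum to `1`. -/
def weightedVar (w y : ι → 𝕜) : 𝕜 :=
  ∑ i, w i * (y i - w ⬝ᵥ y) ^ 2

lemma weightedVar_eq_weightedSumSquares_sub (hw : ∑ i, w i = 1) (y : ι → 𝕜) :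
    weightedVar w y = weightedSumSquares 𝕜 w y - (w ⬝ᵥ y) ^ 2 := by
  set m := w ⬝ᵥ y with hm
  calc weightedVar w y
      = ∑ i, (w i * (y i * y i) - 2 * m * (w i * y i) + m ^ 2 * w i) :=
        Finset.sum_congr rfl fun i _ ↦ by ring
    _ = weightedSumSquares 𝕜 w y - 2 * m * m + m ^ 2 * 1 := by
        simp only [Finset.sum_add_distrib, Finset.sum_sub_distrib, ← Finset.mul_sum, hw, hm,
          dotProduct, weightedSumSquares_apply, smul_eq_mul]
    _ = weightedSumSquares 𝕜 w y - m ^ 2 := by ring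

lemma sum_vecMul_of_row_sum_eq_one {κ : Type*} [Fintype κ] {R : Matrix ι κ 𝕜}
    (hrow : ∀ i, ∑ j, R i j = 1) (u : ι → 𝕜) : ∑ j, (u ᵥ* R) j = ∑ i, u i := by
  have hR : R *ᵥ 1 = 1 := funext fun i ↦ (dotProduct_one (R i)).trans (hrow i)
  simpa only [dotProduct_one, hR] using (dotProduct_mulVec u R 1).symm

lemma weightedVar_vecMul {κ : Type*} [Fintype κ] {R : Matrix ι κ 𝕜} {u : ι → 𝕜}
    (hrow : ∀ i, ∑ j, R i j = 1) (husum : ∑ i, u i = 1) (y : κ → 𝕜) :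
    weightedVar (u ᵥ* R) y = weightedVar u (R *ᵥ y) + ∑ i, u i * weightedVar (R i) y := by
  have hsecond : ∑ i, u i * weightedSumSquares 𝕜 (R i) y = weightedSumSquares 𝕜 (u ᵥ* R) y := by
    simpa only [dotProduct, mulVec, weightedSumSquares_apply, smul_eq_mul, Pi.mul_apply]
      using dotProduct_mulVec u R (y * y)
  have hrows : ∑ i, u i * weightedVar (R i) y =
      weightedSumSquares 𝕜 (u ᵥ* R) y - weightedSumSquares 𝕜 u (R *ᵥ y) := by
    rw [← hsecond, weightedSumSquares_apply, ← Finset.sum_sub_distrib]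
    refine Finset.sum_congr rfl fun i _ ↦ ?_
    rw [weightedVar_eq_weightedSumSquares_sub (hrow i), mulVec, smul_eq_mul]
    ring
  have hvsum : ∑ j, (u ᵥ* R) j = 1 := (sum_vecMul_of_row_sum_eq_one hrow u).trans husum
  rw [hrows, weightedVar_eq_weightedSumSquares_sub husum,
    weightedVar_eq_weightedSumSquares_sub hvsum, dotProduct_mulVec]
  ring

lemma weightedSumSquares_sub_replicateRow_mulVec {R : Matrix ι ι 𝕜} {u : ι → 𝕜}
    (huR : u ᵥ* R = u) (y : ι → 𝕜) :
    weightedSumSquares 𝕜 u ((R - replicateRow ι u) *ᵥ y) = weightedVar u (R *ᵥ y) := by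
  have hmean : u ⬝ᵥ R *ᵥ y = u ⬝ᵥ y := by rw [dotProduct_mulVec, huR]
  simp only [weightedSumSquares_apply, weightedVar, sub_mulVec, replicateRow_mulVec_eq_const,
    Pi.sub_apply, Function.const_apply, hmean, smul_eq_mul, pow_two]

lemma weightedSumSquares_sub_weightedSumSquares_mulVec {R : Matrix ι ι 𝕜} {u : ι → 𝕜}
    (hrow : ∀ i, ∑ j, R i j = 1) (huR : u ᵥ* R = u) (husum : ∑ i, u i = 1) (y : ι → 𝕜) :
    weightedSumSquares 𝕜 u y - weightedSumSquares 𝕜 u ((R - replicateRow ι u) *ᵥ y) =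
      (u ⬝ᵥ y) ^ 2 + ∑ i, u i * weightedVar (R i) y := by
  have htotal := weightedVar_vecMul hrow husum y
  rw [huR, weightedVar_eq_weightedSumSquares_sub husum] at htotal
  rw [weightedSumSquares_sub_replicateRow_mulVec huR]
  linear_combination htotal

variable [LinearOrder 𝕜] [IsStrictOrderedRing 𝕜]

lemma weightedVar_nonneg (hw : ∀ i, 0 ≤ w i) (y : ι → 𝕜) : 0 ≤ weightedVar w y :=
  Finset.sum_nonneg fun i _ ↦ mul_nonneg (hw i) (sq_nonneg _)

lemma eq_dotProduct_of_weightedVar_eq_zero (hw : ∀ i, 0 ≤ w i) {y : ι → 𝕜}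
    (h : weightedVar w y = 0) {i : ι} (hi : 0 < w i) : y i = w ⬝ᵥ y := by
  have hterm : w i * (y i - w ⬝ᵥ y) ^ 2 = 0 :=
    (Finset.sum_eq_zero_iff_of_nonneg fun i _ ↦ mul_nonneg (hw i) (sq_nonneg _)).1 h i
      (Finset.mem_univ i)
  have hsq : (y i - w ⬝ᵥ y) ^ 2 = 0 := (mul_eq_zero.1 hterm).resolve_left hi.ne'
  exact sub_eq_zero.1 (pow_eq_zero_iff two_ne_zero |>.1 hsq)

end WeightedVar

section StrictContraction

variable {ι 𝕜 : Type*}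

lemma apply_eq_of_isIrreducible {α : Type*} [Ring 𝕜] [LinearOrder 𝕜] {R : Matrix ι ι 𝕜}
    (hR : R.IsIrreducible) {y : ι → α} (hedge : ∀ i j, 0 < R i j → y i = y j) (i j : ι) :
    y i = y j := by
  let : Quiver ι := R.toQuiver
  obtain ⟨p, -⟩ := hR.connected i j
  induction p with
  | nil => rfl
  | cons _ e ih => exact ih.trans (hedge _ _ e.down)

variable [Fintype ι] [CommRing 𝕜] [LinearOrder 𝕜] [IsStrictOrderedRing 𝕜] {R : Matrix ι ι 𝕜}

lemma apply_eq_of_weightedVar_row_eq_zero (hR : R.IsIrreducible) (hdiag : ∀ i, 0 < R i i)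
    {y : ι → 𝕜} (hvar : ∀ i, weightedVar (R i) y = 0) (i j : ι) : y i = y j := by
  refine apply_eq_of_isIrreducible hR (fun k l hkl ↦ ?_) i j
  have hmean {l : ι} : 0 < R k l → y l = R k ⬝ᵥ y :=
    eq_dotProduct_of_weightedVar_eq_zero (hR.nonneg k) (hvar k)
  exact (hmean (hdiag k)).trans (hmean hkl).symm

lemma posDef_weightedSumSquares_sub_comp [DecidableEq ι] (hR : R.IsIrreducible)
    (hrow : ∀ i, ∑ j, R i j = 1) (hdiag : ∀ i, 0 < R i i) {u : ι → 𝕜} (hu : ∀ i, 0 < u i)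
    (huR : u ᵥ* R = u) (husum : ∑ i, u i = 1) :
    (weightedSumSquares 𝕜 u -
      (weightedSumSquares 𝕜 u).comp (R - replicateRow ι u).toLin').PosDef := by
  intro y hy
  have hterm (i : ι) : 0 ≤ u i * weightedVar (R i) y :=
    mul_nonneg (hu i).le (weightedVar_nonneg (hR.nonneg i) y)
  have hsum : 0 ≤ ∑ i, u i * weightedVar (R i) y := Finset.sum_nonneg fun i _ ↦ hterm i
  rw [_root_.sub_apply, QuadraticMap.comp_apply, toLin'_apply,
    weightedSumSquares_sub_weightedSumSquares_mulVec hrow huR husum]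
  refine (add_nonneg (sq_nonneg _) hsum).lt_of_ne' fun hzero ↦ hy (funext fun i ↦ ?_)
  obtain ⟨hmean, hvar⟩ := (add_eq_zero_iff_of_nonneg (sq_nonneg _) hsum).1 hzero
  have hrowVar (k : ι) : weightedVar (R k) y = 0 :=
    (mul_eq_zero.1 ((Finset.sum_eq_zero_iff_of_nonneg fun i _ ↦ hterm i).1 hvar k
      (Finset.mem_univ k))).resolve_left (hu k).ne'
  have hconst := apply_eq_of_weightedVar_row_eq_zero hR hdiag hrowVar
  calc y i = ∑ j, u j * y i := by rw [← Finset.sum_mul, husum, one_mul]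
    _ = u ⬝ᵥ y := Finset.sum_congr rfl fun j _ ↦ by rw [hconst i j]
    _ = 0 := pow_eq_zero_iff two_ne_zero |>.1 hmean

end StrictContraction

section FrobeniusNorm

variable {m n κ : Type*} [Fintype m] [Fintype n] [Fintype κ] [DecidableEq m] [DecidableEq n]

lemma frobNormW_eq_sqrt_sum_weightedSumSquares {w : n → ℝ} (hw : ∀ i, 0 ≤ w i)
    (A : Matrix n κ ℝ) :
    frobNormW w A = √(∑ j, weightedSumSquares ℝ w (A.col j)) := by
  rw [frobNormW, frobNorm, Finset.sum_comm]
  simp only [diagonal_mul, mul_pow, Real.sq_sqrt (hw _), weightedSumSquares_apply, col_apply,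
    smul_eq_mul, ← pow_two]

lemma frobNormW_mul_le {w : m → ℝ} {v : n → ℝ} (hw : ∀ i, 0 ≤ w i) (hv : ∀ i, 0 ≤ v i)
    {M : Matrix m n ℝ} {c : ℝ} (hc : 0 ≤ c)
    (hM : ∀ y, weightedSumSquares ℝ w (M *ᵥ y) ≤ c * weightedSumSquares ℝ v y)
    (A : Matrix n κ ℝ) : frobNormW w (M * A) ≤ √c * frobNormW v A := by
  rw [frobNormW_eq_sqrt_sum_weightedSumSquares hw, frobNormW_eq_sqrt_sum_weightedSumSquares hv,
    ← Real.sqrt_mul hc, Finset.mul_sum]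
  exact Real.sqrt_le_sqrt (Finset.sum_le_sum fun j _ ↦ hM (A.col j))

end FrobeniusNorm

section Averaging

variable {m n κ 𝕜 : Type*} [Fintype n]

lemma mul_replicateRow_of_row_sum_eq_one [NonAssocSemiring 𝕜] {R : Matrix m n 𝕜}
    (hrow : ∀ i, ∑ j, R i j = 1) (u : κ → 𝕜) : R * replicateRow n u = replicateRow m u := by
  ext i k
  simp only [mul_apply, replicateRow_apply, ← Finset.sum_mul, hrow, one_mul]

lemma sub_replicateRow_mul_sub_replicateRow_mul [Ring 𝕜] {R : Matrix n n 𝕜} {u : n → 𝕜}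
    (hrow : ∀ i, ∑ j, R i j = 1) (husum : ∑ i, u i = 1) (x : Matrix n κ 𝕜) :
    (R - replicateRow n u) * (x - replicateRow n u * x) = R * x - replicateRow n u * x := by
  have hR : R * replicateRow n u = replicateRow n u := mul_replicateRow_of_row_sum_eq_one hrow u
  have hu : replicateRow n u * replicateRow n u = replicateRow n u :=
    mul_replicateRow_of_row_sum_eq_one (fun _ ↦ husum) u
  have hcancel : (R - replicateRow n u) * replicateRow n u = 0 := by
    rw [Matrix.sub_mul, hR, hu, sub_self]
  rw [Matrix.mul_sub, ← Matrix.mul_assoc, hcancel, Matrix.zero_mul, sub_zero, Matrix.sub_mul]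

end Averaging

theorem stmt_4_general {ι : Type*} [Fintype ι] [DecidableEq ι] {R : Matrix ι ι ℝ}
    (hR : R.IsIrreducible) (hrow : ∀ i, ∑ j, R i j = 1) (hdiag : ∀ i, 0 < R i i)
    {u : ι → ℝ} (hu : ∀ i, 0 < u i) (huR : u ᵥ* R = u) (husum : ∑ i, u i = 1) :
    ∃ σ : ℝ, 0 < σ ∧ σ < 1 ∧ ∀ (κ : Type*) [Fintype κ] (x : Matrix ι κ ℝ),
      frobNormW u (R * x - replicateRow ι u * x) ≤
        σ * frobNormW u (x - replicateRow ι u * x) := by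
  obtain ⟨c, hc0, hc1, hc⟩ := exists_lt_one_le_mul_of_posDef_sub
    (posDef_weightedSumSquares_sub_comp hR hrow hdiag hu huR husum)
  refine ⟨√c, Real.sqrt_pos.2 hc0, Real.sqrt_one ▸ Real.sqrt_lt_sqrt hc0.le hc1, fun κ _ x ↦ ?_⟩
  rw [← sub_replicateRow_mul_sub_replicateRow_mul hrow husum]
  exact frobNormW_mul_le (fun i ↦ (hu i).le) (fun i ↦ (hu i).le) hc0.le hc _

/-- for a nonnegative, row-stochastic, irreducible matrix `R` with
positive diagonal and positive normalized left eigenvector `u`, there is a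
contraction factor `σ_R ∈ (0,1)` with
`‖R x − 1 uᵀ x‖_F^u ≤ σ_R ‖x − 1 uᵀ x‖_F^u` for every matrix `x`. -/
theorem stmt_4 (n : ℕ) (hn : 0 < n) (R : Matrix (Fin n) (Fin n) ℝ)
    (hnonneg : ∀ i j, 0 ≤ R i j)
    (hrow : ∀ i, ∑ j, R i j = 1)
    (hdiag : ∀ i, 0 < R i i)
    (hirr : ∀ i j, ∃ k : ℕ, 1 ≤ k ∧ 0 < (R ^ k) i j)
    (u : Fin n → ℝ) (hu : ∀ i, 0 < u i)
    (huR : Matrix.vecMul u R = u) (husum : ∑ i, u i = 1) :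
    ∃ σR : ℝ, 0 < σR ∧ σR < 1 ∧
      ∀ (q : ℕ) (x : Matrix (Fin n) (Fin q) ℝ),
        frobNormW u (R * x - Matrix.of (fun _ j => u j) * x) ≤
          σR * frobNormW u (x - Matrix.of (fun _ j => u j) * x) := by
  obtain ⟨σ, hσ0, hσ1, hσ⟩ := stmt_4_general ((isIrreducible_iff_exists_pow_pos hnonneg).2 hirr)
    hrow hdiag hu huR husum
  exact ⟨σ, hσ0, hσ1, fun q ↦ hσ (Fin q)⟩
end

section
/- Let C ∈ ℝ^{m×m} be nonnegative, column-stochastic (1^T C = 1^T), with positive diagonal entries and irreducible, and let v ∈ ℝ^m be its positive right eigenvector with C v = v and 1^T v = 1. Then there exists a constant σ_C with 0 < σ_C < 1 such that for every p ∈ ℕ and every matrix y ∈ ℝ^{m×p}: ‖C y − v 1^T y‖_F^v ≤ σ_C · ‖y − v 1^T y‖_F^v. -/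
/-- The weighted Frobenius norm `‖B‖_F^v = ‖diag(√v)⁻¹ B‖_F`. -/
noncomputable def frobNormWinv {n q : Type*} [Fintype n] [Fintype q] [DecidableEq n]
    (w : n → ℝ) (A : Matrix n q ℝ) : ℝ :=
  frobNorm (Matrix.diagonal (fun i => (Real.sqrt (w i))⁻¹) * A)

/-!
Put `Q_w x = ∑ i, x i ^ 2 / w i`. For a column-stochastic `C`, the loss
`Q_v x - Q_{Cv} (C x)` is a sum of squares, weighted by `C i j * v j`, of the deviations of the
ratios `x j / v j` from their averages `(C x) i / (C v) i`. If the loss vanishes, columns of `C`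
that are positive in a common row have equal ratios; when `Cᵀ C` is irreducible, `x` is then
proportional to `v`, so it vanishes if its entries sum to zero. Compactness of the unit sphere of
the zero-sum hyperplane turns this strict inequality into a uniform contraction factor, which is
applied to each column of `y - v 1ᵀ y`. A positive diagonal makes `Cᵀ C` inherit the
irreducibility of `C`, since `(Cᵀ C) i j ≥ C i i * C i j`.
-/

open Matrix

section Irreducible

variable {n R : Type*} [Ring R] [LinearOrder R] {A B : Matrix n n R}

lemma eq_of_isIrreducible_of_forall_pos_imp_eq {α : Type*} (hA : A.IsIrreducible) {f : n → α}
    (hf : ∀ i j, 0 < A i j → f i = f j) (i j : n) : f i = f j := by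
  let : Quiver n := A.toQuiver
  obtain ⟨path, -⟩ := hA.connected i j
  induction path with
  | nil => rfl
  | cons _ edge ih => exact ih.trans (hf _ _ edge.down)

lemma isIrreducible_of_forall_pos_imp_pos (hA : A.IsIrreducible) (hB : ∀ i j, 0 ≤ B i j)
    (hAB : ∀ i j, 0 < A i j → 0 < B i j) : B.IsIrreducible := by
  refine ⟨hB, fun i j => ?_⟩
  obtain ⟨path, hpath⟩ := hA.connected i j
  let inclusion : @Prefunctor n A.toQuiver n B.toQuiver :=
    @Prefunctor.mk n A.toQuiver n B.toQuiver id fun edge => ⟨hAB _ _ edge.down⟩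
  cases path with
  | nil => exact absurd hpath (lt_irrefl 0)
  | cons path edge =>
    let : Quiver n := A.toQuiver
    exact ⟨@Prefunctor.mapPath n _ n B.toQuiver inclusion _ _ (path.cons edge), Nat.succ_pos _⟩

lemma isIrreducible_transpose_mul_self [IsStrictOrderedRing R] [Fintype n]
    (hA : A.IsIrreducible) (hdiag : ∀ i, 0 < A i i) : (Aᵀ * A).IsIrreducible := by
  have term_nonneg (i j k : n) : 0 ≤ A k i * A k j :=
    mul_nonneg (hA.nonneg k i) (hA.nonneg k j)
  refine isIrreducible_of_forall_pos_imp_pos hA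
    (fun i j => Finset.sum_nonneg fun k _ => term_nonneg i j k) fun i j hij => ?_
  exact Finset.sum_pos' (fun k _ => term_nonneg i j k)
    ⟨i, Finset.mem_univ i, mul_pos (hdiag i) hij⟩

end Irreducible

lemma exists_forall_le_mul_of_homogeneous {E : Type*} [NormedAddCommGroup E] [NormedSpace ℝ E]
    [ProperSpace E] {f g : E → ℝ} {k : ℕ} (hk : k ≠ 0) (hf : Continuous f) (hg : Continuous g)
    (f_smul : ∀ (c : ℝ) x, f (c • x) = c ^ k * f x)
    (g_smul : ∀ (c : ℝ) x, g (c • x) = c ^ k * g x)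
    (g_pos : ∀ x, x ≠ 0 → 0 < g x) (hfg : ∀ x, x ≠ 0 → f x < g x) :
    ∃ s : ℝ, 0 < s ∧ s < 1 ∧ ∀ x, f x ≤ s * g x := by
  have ne_zero (x : E) (hx : x ∈ Metric.sphere (0 : E) 1) : x ≠ 0 :=
    ne_zero_of_mem_unit_sphere ⟨x, hx⟩
  have ratio_continuousOn : ContinuousOn (fun x => f x / g x) (Metric.sphere (0 : E) 1) :=
    hf.continuousOn.div hg.continuousOn fun x hx => (g_pos x (ne_zero x hx)).ne'
  obtain ⟨t, ht, ratio_le⟩ : ∃ t < 1, ∀ x ∈ Metric.sphere (0 : E) 1, f x / g x ≤ t :=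
    (isCompact_sphere (0 : E) 1).exists_forall_le' (α := ℝᵒᵈ) ratio_continuousOn fun x hx =>
      (div_lt_one (g_pos x (ne_zero x hx))).2 (hfg x (ne_zero x hx))
  refine ⟨max t (1 / 2), by positivity, max_lt ht one_half_lt_one, fun x => ?_⟩
  rcases eq_or_ne x 0 with rfl | hx
  · have f_zero : f 0 = 0 := by simpa [hk] using f_smul 0 0
    have g_zero : g 0 = 0 := by simpa [hk] using g_smul 0 0
    simp [f_zero, g_zero]
  · have normalized_mem : ‖x‖⁻¹ • x ∈ Metric.sphere (0 : E) 1 := by simp [norm_smul, hx]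
    have ratio_eq : f (‖x‖⁻¹ • x) / g (‖x‖⁻¹ • x) = f x / g x := by
      rw [f_smul, g_smul, mul_div_mul_left _ _ (by positivity)]
    exact (div_le_iff₀ (g_pos x hx)).1 <|
      ratio_eq ▸ (ratio_le _ normalized_mem).trans (le_max_left _ _)

/-- The square of the weighted Euclidean norm `‖diag(√w)⁻¹ x‖`, for a positive weight `w`; its sum
over the columns of a matrix is the square of the weighted Frobenius norm. -/
noncomputable def weightedNormSq {n : Type*} [Fintype n] (w x : n → ℝ) : ℝ :=
  ∑ i, x i ^ 2 / w i

section WeightedNormSq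

variable {n : Type*} [Fintype n]

lemma weightedNormSq_smul (w : n → ℝ) (c : ℝ) (x : n → ℝ) :
    weightedNormSq w (c • x) = c ^ 2 * weightedNormSq w x := by
  simp only [weightedNormSq, Pi.smul_apply, smul_eq_mul, mul_pow, mul_div_assoc, Finset.mul_sum]

@[fun_prop]
lemma continuous_weightedNormSq (w : n → ℝ) : Continuous (weightedNormSq w) := by
  unfold weightedNormSq
  fun_prop

lemma weightedNormSq_pos {w x : n → ℝ} (hw : ∀ i, 0 < w i) (hx : x ≠ 0) :
    0 < weightedNormSq w x := by
  obtain ⟨i, hi⟩ := Function.ne_iff.1 hx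
  exact Finset.sum_pos' (fun j _ => div_nonneg (sq_nonneg _) (hw j).le)
    ⟨i, Finset.mem_univ i, div_pos (sq_pos_of_ne_zero hi) (hw i)⟩

lemma frobNormWinv_eq_sqrt_sum_weightedNormSq [DecidableEq n] {q : Type*} [Fintype q]
    {w : n → ℝ} (hw : ∀ i, 0 ≤ w i) (A : Matrix n q ℝ) :
    frobNormWinv w A = √(∑ j, weightedNormSq w (A.col j)) := by
  simp only [frobNormWinv, frobNorm, weightedNormSq, diagonal_mul, ← div_eq_inv_mul,
    div_pow, Real.sq_sqrt (hw _)]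
  rw [Finset.sum_comm]
  rfl

end WeightedNormSq

lemma sum_col_sub_replicateCol_mul {n q R : Type*} [Ring R] [Fintype n] {v : n → R}
    (hvsum : ∑ j, v j = 1) (y : Matrix n q R) (k : q) :
    ∑ j, (y - replicateCol n v * y).col k j = 0 := by
  simp only [col_apply, Matrix.sub_apply, mul_apply, replicateCol_apply, Finset.sum_sub_distrib,
    ← Finset.mul_sum, ← Finset.sum_mul, hvsum, one_mul, sub_self]

section Contraction

variable {m n : Type*} [Fintype m] [Fintype n] {C : Matrix m n ℝ} {v : n → ℝ}

lemma weightedNormSq_sub_weightedNormSq_mulVec (hcol : ∀ j, ∑ i, C i j = 1) (hv : ∀ j, v j ≠ 0)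
    (hCv : ∀ i, (C *ᵥ v) i ≠ 0) (x : n → ℝ) :
    weightedNormSq v x - weightedNormSq (C *ᵥ v) (C *ᵥ x) =
      ∑ i, ∑ j, C i j * v j * (x j / v j - (C *ᵥ x) i / (C *ᵥ v) i) ^ 2 := by
  have weightedNormSq_eq : weightedNormSq v x = ∑ i, ∑ j, C i j * (x j ^ 2 / v j) := by
    rw [Finset.sum_comm]
    simp only [← Finset.sum_mul, hcol, one_mul, weightedNormSq]
  rw [weightedNormSq_eq, weightedNormSq, ← Finset.sum_sub_distrib]
  refine Finset.sum_congr rfl fun i _ => ?_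
  have expand_sq (r : ℝ) (j : n) : C i j * v j * (x j / v j - r) ^ 2 =
      C i j * (x j ^ 2 / v j) - 2 * r * (C i j * x j) + r ^ 2 * (C i j * v j) := by
    have := hv j
    field_simp
    ring
  have sum_mul_eq (u : n → ℝ) : ∑ j, C i j * u j = (C *ᵥ u) i := rfl
  simp only [expand_sq, Finset.sum_add_distrib, Finset.sum_sub_distrib, ← Finset.mul_sum,
    sum_mul_eq]
  have := hCv i
  field_simp
  ring

lemma div_eq_div_of_weightedNormSq_le (hnonneg : ∀ i j, 0 ≤ C i j) (hcol : ∀ j, ∑ i, C i j = 1)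
    (hv : ∀ j, 0 < v j) (hCv : ∀ i, (C *ᵥ v) i ≠ 0) {x : n → ℝ}
    (hx : weightedNormSq v x ≤ weightedNormSq (C *ᵥ v) (C *ᵥ x)) {i : m} {j : n}
    (hij : 0 < C i j) : x j / v j = (C *ᵥ x) i / (C *ᵥ v) i := by
  let loss (i : m) (j : n) : ℝ := C i j * v j * (x j / v j - (C *ᵥ x) i / (C *ᵥ v) i) ^ 2
  have loss_nonneg (i j) : 0 ≤ loss i j :=
    mul_nonneg (mul_nonneg (hnonneg i j) (hv j).le) (sq_nonneg _)
  have loss_le_zero : loss i j ≤ 0 := calc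
    loss i j ≤ ∑ j, loss i j :=
      Finset.single_le_sum (fun j _ => loss_nonneg i j) (Finset.mem_univ j)
    _ ≤ ∑ i, ∑ j, loss i j :=
      Finset.single_le_sum (f := fun i => ∑ j, loss i j)
        (fun i _ => Finset.sum_nonneg fun j _ => loss_nonneg i j) (Finset.mem_univ i)
    _ = weightedNormSq v x - weightedNormSq (C *ᵥ v) (C *ᵥ x) :=
      (weightedNormSq_sub_weightedNormSq_mulVec hcol (fun j => (hv j).ne') hCv x).symm
    _ ≤ 0 := sub_nonpos.2 hx
  have sq_le_zero := nonpos_of_mul_nonpos_right loss_le_zero (mul_pos hij (hv j))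
  exact sub_eq_zero.1 ((sq_nonpos_iff _).1 sq_le_zero)

lemma weightedNormSq_mulVec_lt (hnonneg : ∀ i j, 0 ≤ C i j) (hcol : ∀ j, ∑ i, C i j = 1)
    (hirr : (Cᵀ * C).IsIrreducible) (hv : ∀ j, 0 < v j) (hCv : ∀ i, (C *ᵥ v) i ≠ 0)
    {x : n → ℝ} (hx_sum : ∑ j, x j = 0) (hx : x ≠ 0) :
    weightedNormSq (C *ᵥ v) (C *ᵥ x) < weightedNormSq v x := by
  by_contra! hle
  have ratio_eq_of_pos (j k : n) (hjk : 0 < (Cᵀ * C) j k) : x j / v j = x k / v k := by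
    obtain ⟨i, -, hi⟩ := Finset.exists_ne_zero_of_sum_ne_zero hjk.ne'
    have hij : 0 < C i j := (hnonneg i j).lt_of_ne' (left_ne_zero_of_mul hi)
    have hik : 0 < C i k := (hnonneg i k).lt_of_ne' (right_ne_zero_of_mul hi)
    exact (div_eq_div_of_weightedNormSq_le hnonneg hcol hv hCv hle hij).trans
      (div_eq_div_of_weightedNormSq_le hnonneg hcol hv hCv hle hik).symm
  obtain ⟨k, hk⟩ := Function.ne_iff.1 hx
  have eq_mul (j : n) : x j = x k / v k * v j := by
    rw [eq_of_isIrreducible_of_forall_pos_imp_eq hirr ratio_eq_of_pos k j,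
      div_mul_cancel₀ _ (hv j).ne']
  have sum_pos : 0 < ∑ j, v j := Finset.sum_pos (fun j _ => hv j) ⟨k, Finset.mem_univ k⟩
  have sum_ne_zero : ∑ j, x j ≠ 0 := by
    rw [Finset.sum_congr rfl fun j _ => eq_mul j, ← Finset.mul_sum]
    exact mul_ne_zero (div_ne_zero hk (hv k).ne') sum_pos.ne'
  exact sum_ne_zero hx_sum

lemma exists_weightedNormSq_mulVec_le (hnonneg : ∀ i j, 0 ≤ C i j) (hcol : ∀ j, ∑ i, C i j = 1)
    (hirr : (Cᵀ * C).IsIrreducible) (hv : ∀ j, 0 < v j) (hCv : ∀ i, (C *ᵥ v) i ≠ 0) :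
    ∃ s : ℝ, 0 < s ∧ s < 1 ∧ ∀ x : n → ℝ, ∑ j, x j = 0 →
      weightedNormSq (C *ᵥ v) (C *ᵥ x) ≤ s * weightedNormSq v x := by
  let zeroSum : Submodule ℝ (n → ℝ) := LinearMap.ker (∑ j, LinearMap.proj j)
  have mem_zeroSum (x : n → ℝ) : x ∈ zeroSum ↔ ∑ j, x j = 0 := by simp [zeroSum]
  obtain ⟨s, hs_pos, hs_lt, hs⟩ := exists_forall_le_mul_of_homogeneous (E := zeroSum)
    (f := fun x => weightedNormSq (C *ᵥ v) (C *ᵥ x)) (g := fun x => weightedNormSq v x)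
    two_ne_zero (by fun_prop) (by fun_prop)
    (fun c x => by rw [Submodule.coe_smul, mulVec_smul, weightedNormSq_smul])
    (fun c x => by rw [Submodule.coe_smul, weightedNormSq_smul])
    (fun x hx => weightedNormSq_pos hv (Subtype.coe_ne_coe.2 hx))
    (fun x hx => weightedNormSq_mulVec_lt hnonneg hcol hirr hv hCv
      ((mem_zeroSum x).1 x.2) (Subtype.coe_ne_coe.2 hx))
  exact ⟨s, hs_pos, hs_lt, fun x hx => hs ⟨x, (mem_zeroSum x).2 hx⟩⟩

theorem stmt_5_general [DecidableEq m] [DecidableEq n] (hnonneg : ∀ i j, 0 ≤ C i j)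
    (hcol : ∀ j, ∑ i, C i j = 1) (hirr : (Cᵀ * C).IsIrreducible) (hv : ∀ j, 0 < v j)
    (hCv : ∀ i, 0 < (C *ᵥ v) i) (hvsum : ∑ j, v j = 1) :
    ∃ σC : ℝ, 0 < σC ∧ σC < 1 ∧ ∀ {q : Type*} [Fintype q] (y : Matrix n q ℝ),
      frobNormWinv (C *ᵥ v) (C * y - replicateCol n (C *ᵥ v) * y) ≤
        σC * frobNormWinv v (y - replicateCol n v * y) := by
  obtain ⟨s, hs_pos, hs_lt, hs⟩ :=
    exists_weightedNormSq_mulVec_le hnonneg hcol hirr hv fun i => (hCv i).ne'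
  refine ⟨√s, Real.sqrt_pos.2 hs_pos, (Real.sqrt_lt' one_pos).2 (by simpa using hs_lt),
    fun y => ?_⟩
  have deviation_eq : C * y - replicateCol n (C *ᵥ v) * y = C * (y - replicateCol n v * y) := by
    rw [replicateCol_mulVec, Matrix.mul_assoc, Matrix.mul_sub]
  rw [deviation_eq, frobNormWinv_eq_sqrt_sum_weightedNormSq fun i => (hCv i).le,
    frobNormWinv_eq_sqrt_sum_weightedNormSq fun j => (hv j).le, ← Real.sqrt_mul hs_pos.le,
    Finset.mul_sum]
  exact Real.sqrt_le_sqrt <| Finset.sum_le_sum fun k _ =>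
    hs _ (sum_col_sub_replicateCol_mul hvsum y k)

end Contraction

/-- for a nonnegative, column-stochastic, irreducible matrix `C`
with positive diagonal and positive normalized right eigenvector `v`, there is
a contraction factor `σ_C ∈ (0,1)` with
`‖C y − v 1ᵀ y‖_F^v ≤ σ_C ‖y − v 1ᵀ y‖_F^v` for every matrix `y`. -/
theorem stmt_5 (m : ℕ) (hm : 0 < m) (C : Matrix (Fin m) (Fin m) ℝ)
    (hnonneg : ∀ i j, 0 ≤ C i j)
    (hcol : ∀ j, ∑ i, C i j = 1)
    (hdiag : ∀ i, 0 < C i i)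
    (hirr : ∀ i j, ∃ k : ℕ, 1 ≤ k ∧ 0 < (C ^ k) i j)
    (v : Fin m → ℝ) (hv : ∀ i, 0 < v i)
    (hvC : C.mulVec v = v) (hvsum : ∑ i, v i = 1) :
    ∃ σC : ℝ, 0 < σC ∧ σC < 1 ∧
      ∀ (p : ℕ) (y : Matrix (Fin m) (Fin p) ℝ),
        frobNormWinv v (C * y - Matrix.of (fun i _ => v i) * y) ≤
          σC * frobNormWinv v (y - Matrix.of (fun i _ => v i) * y) := by
  have h := stmt_5_general hnonneg hcol (isIrreducible_transpose_mul_self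
    ((isIrreducible_iff_exists_pow_pos hnonneg).2 hirr) hdiag) hv (hvC.symm ▸ hv) hvsum
  obtain ⟨σC, hpos, hlt, hle⟩ := hvC ▸ h
  -- `Matrix.of (fun i _ => v i) * y` elaborates to the product of `CStarMatrix`, which is
  -- definitionally, but not syntactically, the product of `Matrix`.
  exact ⟨σC, hpos, hlt, fun _ y => hle y⟩
end
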